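/- Let Ω satisfy Assumption 1. Let ω be a C¹ divergence-free vector field on Ω̄, periodic in q₁ and q₂, with ω̂₁ = ω̂₂ = 0 on the boundary surfaces q₃ = ρ₀ and q₃ = ρ₁. Then for l = 0,1, (2l−1) ∫_{∂Ω^l} (n·∇)ω · ω dS = −∫₀¹∫₀¹ [∂_{q₃}(H₁H₂) H₃⁻¹ ω̂₃²]|_{q₃=ρ_l} dq₁ dq₂, where ∂Ω^l = {q₃ = ρ_l} and n is the outward unit normal of Ω. -/

import Mathlib

open MeasureTheory Set Filter Bornology
open scoped ENNReal NNReal Topology RealInnerProductSpace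

noncomputable section

/-- Euclidean 3-space. -/
abbrev E3 : Type := EuclideanSpace ℝ (Fin 3)

/-- The vector of `E3` with the given three coordinates. -/
def v3 (a b c : ℝ) : E3 := (WithLp.equiv 2 (Fin 3 → ℝ)).symm ![a, b, c]

/-- Partial derivative in the `i`-th coordinate direction of a vector field. -/
def pdv (i : Fin 3) (f : E3 → E3) (x : E3) : E3 := fderiv ℝ f x (EuclideanSpace.single i 1)

/-- Partial derivative in the `i`-th coordinate direction of a scalar field. -/
def pds (i : Fin 3) (f : E3 → ℝ) (x : E3) : ℝ := fderiv ℝ f x (EuclideanSpace.single i 1)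

/-- Divergence `∇·u` of a vector field on `ℝ³`. -/
def div3 (u : E3 → E3) (x : E3) : ℝ := ∑ i, pdv i u x i

/-- Curl (vorticity) `∇×u` of a vector field on `ℝ³`. -/
def curl3 (u : E3 → E3) (x : E3) : E3 :=
  v3 (pdv 1 u x 2 - pdv 2 u x 1) (pdv 2 u x 0 - pdv 0 u x 2) (pdv 0 u x 1 - pdv 1 u x 0)

/-- Cross product on `ℝ³`. -/
def cross3 (a b : E3) : E3 :=
  v3 (a 1 * b 2 - a 2 * b 1) (a 2 * b 0 - a 0 * b 2) (a 0 * b 1 - a 1 * b 0)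

/-- The shear (rate-of-strain) tensor `D(u) = (∇u + (∇u)ᵀ)/2` applied to a vector `v`. -/
def Dapply (u : E3 → E3) (x v : E3) : E3 :=
  (WithLp.equiv 2 (Fin 3 → ℝ)).symm
    (fun j => (1 / 2) * ∑ i, (pdv i u x j + pdv j u x i) * v i)

/-- Assumption 1 of the paper: an orthogonal curvilinear coordinate system
`x = Φ(q)` taking `Ω` onto `Ω̂ = {0 ≤ q₁ < 1, 0 ≤ q₂ < 1, ρ₀ ≤ q₃ ≤ ρ₁}`,
periodic (with period 1) in `q₁` and `q₂`, with the `q₃`-direction the outward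
normal on the boundary component `{q₃ = ρ₁}` and the inward normal on `{q₃ = ρ₀}`. -/
structure CurvCoord (Ω : Set E3) (ρ₀ ρ₁ : ℝ) : Type where
  /-- the coordinate map, `x = Φ q` -/
  Φ : E3 → E3
  ρ₀_pos : 0 < ρ₀
  ρ₀_lt_ρ₁ : ρ₀ < ρ₁
  smooth : ContDiff ℝ (⊤ : ℕ∞) Φ
  periodic₁ : ∀ q : E3, Φ (q + EuclideanSpace.single 0 1) = Φ q
  periodic₂ : ∀ q : E3, Φ (q + EuclideanSpace.single 1 1) = Φ q
  orth : ∀ q : E3, ∀ i j : Fin 3, i ≠ j → ⟪pdv i Φ q, pdv j Φ q⟫ = 0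
  nondeg : ∀ q : E3, ∀ i : Fin 3, pdv i Φ q ≠ 0
  image_eq :
    Φ '' {q : E3 | q 0 ∈ Ico (0 : ℝ) 1 ∧ q 1 ∈ Ico (0 : ℝ) 1 ∧ q 2 ∈ Icc ρ₀ ρ₁} = closure Ω
  injOn : InjOn Φ {q : E3 | q 0 ∈ Ico (0 : ℝ) 1 ∧ q 1 ∈ Ico (0 : ℝ) 1 ∧ q 2 ∈ Icc ρ₀ ρ₁}
  interior_mem : ∀ q : E3, q 2 ∈ Ioo ρ₀ ρ₁ → Φ q ∈ Ω
  q₃_outward : ∀ q : E3, q 2 = ρ₁ →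
    ∀ᶠ t in 𝓝[>] (0 : ℝ), Φ q + t • (‖pdv 2 Φ q‖⁻¹ • pdv 2 Φ q) ∉ closure Ω
  q₃_inward : ∀ q : E3, q 2 = ρ₀ →
    ∀ᶠ t in 𝓝[>] (0 : ℝ), Φ q - t • (‖pdv 2 Φ q‖⁻¹ • pdv 2 Φ q) ∉ closure Ω

/-- Lamé coefficient `H_i(q) = |∂x/∂q_i|`. -/
def lame (Φ : E3 → E3) (i : Fin 3) (q : E3) : ℝ := ‖pdv i Φ q‖

/-- Orthonormal frame vector `ê_i = H_i⁻¹ ∂x/∂q_i`. -/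
def uvec (Φ : E3 → E3) (i : Fin 3) (q : E3) : E3 := (lame Φ i q)⁻¹ • pdv i Φ q

/-- Frame component `v̂_i(q) = v(Φ(q)) · ê_i(q)` of a vector field `v` in the
curvilinear coordinates. -/
def fc (Φ : E3 → E3) (v : E3 → E3) (i : Fin 3) (q : E3) : ℝ := ⟪v (Φ q), uvec Φ i q⟫

/-- The coordinate box `Ω̂`. -/
def Qset (ρ₀ ρ₁ : ℝ) : Set E3 :=
  {q : E3 | q 0 ∈ Icc (0 : ℝ) 1 ∧ q 1 ∈ Icc (0 : ℝ) 1 ∧ q 2 ∈ Icc ρ₀ ρ₁}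

/-- Value `ρ_l` of the coordinate `q₃` on the boundary component `∂Ω^l`, `l = 0, 1`. -/
def bval (ρ₀ ρ₁ : ℝ) (l : Fin 2) : ℝ := if l = 0 then ρ₀ else ρ₁

lemma pdv_differentiable {Φ : E3 → E3} (h : ContDiff ℝ (⊤ : ℕ∞) Φ) (i : Fin 3) :
    Differentiable ℝ (pdv i Φ) := by
  have h2 : ContDiff ℝ 1 (fderiv ℝ Φ) := h.fderiv_right (by norm_cast)
  intro x
  exact (h2.differentiable one_ne_zero x).clm_apply (differentiableAt_const _)

lemma pdv_comm {Φ : E3 → E3} (h : ContDiff ℝ (⊤ : ℕ∞) Φ) (i j : Fin 3) (q : E3) :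
    pdv j (pdv i Φ) q = pdv i (pdv j Φ) q := by
  have h2 : ContDiff ℝ 1 (fderiv ℝ Φ) := h.fderiv_right (by norm_cast)
  have h3 := h2.differentiable one_ne_zero q
  have key : ∀ i j : Fin 3, pdv j (pdv i Φ) q =
      fderiv ℝ (fderiv ℝ Φ) q (EuclideanSpace.single j 1) (EuclideanSpace.single i 1) := by
    intro i j
    have : HasFDerivAt (pdv i Φ) _ q :=
      h3.hasFDerivAt.clm_apply (hasFDerivAt_const (EuclideanSpace.single i (1 : ℝ)) q)
    rw [pdv, this.fderiv]
    simp
  rw [key, key]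
  have hs : IsSymmSndFDerivAt ℝ Φ q := by
    refine (h.contDiffAt).isSymmSndFDerivAt ?_
    simp only [minSmoothness_of_isRCLikeNormedField]
    norm_cast
  exact hs _ _

lemma lame_pos {Ω : Set E3} {ρ₀ ρ₁ : ℝ} (C : CurvCoord Ω ρ₀ ρ₁) (i : Fin 3) (q : E3) :
    0 < lame C.Φ i q := norm_pos_iff.mpr (C.nondeg q i)

lemma lame_differentiable {Ω : Set E3} {ρ₀ ρ₁ : ℝ} (C : CurvCoord Ω ρ₀ ρ₁) (i : Fin 3) :
    Differentiable ℝ (lame C.Φ i) := fun q =>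
  (pdv_differentiable C.smooth i q).norm ℝ (C.nondeg q i)

lemma pds_lame {Ω : Set E3} {ρ₀ ρ₁ : ℝ} (C : CurvCoord Ω ρ₀ ρ₁) (i j : Fin 3) (q : E3) :
    lame C.Φ i q * pds j (lame C.Φ i) q = ⟪pdv i C.Φ q, pdv j (pdv i C.Φ) q⟫ := by
  have hd := lame_differentiable C i q
  have hX := pdv_differentiable C.smooth i q
  have h1 : (fun x => lame C.Φ i x * lame C.Φ i x) = fun x => ⟪pdv i C.Φ x, pdv i C.Φ x⟫ := by
    funext x
    rw [real_inner_self_eq_norm_mul_norm]; rfl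
  have h2 := congrArg (fun f => fderiv ℝ f q (EuclideanSpace.single j (1 : ℝ))) h1
  rw [fderiv_inner_apply ℝ hX hX, fderiv_fun_mul hd hd] at h2
  simp only [_root_.add_apply, _root_.smul_apply, smul_eq_mul] at h2
  rw [real_inner_comm (pdv i C.Φ q)] at h2
  simp only [pds, pdv] at *
  linarith

/-- The orthonormal frame at a point. -/
def frameB {Ω : Set E3} {ρ₀ ρ₁ : ℝ} (C : CurvCoord Ω ρ₀ ρ₁) (q : E3) :
    { b : OrthonormalBasis (Fin 3) ℝ E3 // ∀ i, b i = uvec C.Φ i q } := by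
  have ho : Orthonormal ℝ (fun i => uvec C.Φ i q) := by
    constructor
    · intro i
      have := lame_pos C i q
      simp only [uvec, norm_smul, norm_inv, Real.norm_eq_abs, abs_of_pos this]
      exact inv_mul_cancel₀ this.ne'
    · intro i j hij
      simp only [uvec, inner_smul_left, inner_smul_right]
      rw [C.orth q i j hij]; simp
  refine ⟨(basisOfOrthonormalOfCardEqFinrank ho (by simp)).toOrthonormalBasis (by simpa using ho), ?_⟩
  intro i
  simp

lemma sum_fc_sq {Ω : Set E3} {ρ₀ ρ₁ : ℝ} (C : CurvCoord Ω ρ₀ ρ₁) (w : E3 → E3) (q : E3) :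
    ∑ i : Fin 3, fc C.Φ w i q ^ 2 = ⟪w (C.Φ q), w (C.Φ q)⟫ := by
  obtain ⟨b, hb⟩ := frameB C q
  rw [real_inner_self_eq_norm_sq, ← b.sum_sq_norm_inner_left]
  refine Finset.sum_congr rfl fun i _ => ?_
  rw [hb, Real.norm_eq_abs, sq_abs]; rfl

lemma div3_frame {Ω : Set E3} {ρ₀ ρ₁ : ℝ} (C : CurvCoord Ω ρ₀ ρ₁) {w : E3 → E3}
    (q : E3) :
    div3 w (C.Φ q) = ∑ i, ⟪uvec C.Φ i q, fderiv ℝ w (C.Φ q) (uvec C.Φ i q)⟫ := by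
  obtain ⟨b, hb⟩ := frameB C q
  have h1 := LinearMap.trace_eq_sum_inner (fderiv ℝ w (C.Φ q)).toLinearMap b
  have h2 := LinearMap.trace_eq_sum_inner (fderiv ℝ w (C.Φ q)).toLinearMap
    (EuclideanSpace.basisFun (Fin 3) ℝ)
  rw [h1] at h2
  simp only [hb] at h2
  simp only [div3, pdv]
  refine Eq.trans ?_ h2.symm
  refine Finset.sum_congr rfl fun i _ => ?_
  simp [EuclideanSpace.inner_single_left]

lemma Phi_mem {Ω : Set E3} {ρ₀ ρ₁ : ℝ} (C : CurvCoord Ω ρ₀ ρ₁) (q : E3)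
    (hq : q 2 = ρ₀ ∨ q 2 = ρ₁) : C.Φ q ∈ closure Ω := by
  have hc : Continuous (fun t : ℝ => C.Φ (q + (t - q 2) • EuclideanSpace.single 2 (1 : ℝ))) :=
    C.smooth.continuous.comp (by fun_prop)
  have hm : q 2 ∈ closure (Ioo ρ₀ ρ₁) := by
    rw [closure_Ioo C.ρ₀_lt_ρ₁.ne]
    have := C.ρ₀_lt_ρ₁
    rcases hq with h | h <;> rw [h] <;> constructor <;> linarith
  have := map_mem_closure hc hm (t := Ω) (fun t ht => C.interior_mem _ (by simpa using ht))
  simpa using this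

lemma tangential {Ω : Set E3} {ρ₀ ρ₁ : ℝ} (C : CurvCoord Ω ρ₀ ρ₁)
    (w : E3 → E3) (hw : ContDiff ℝ 1 w) (q : E3) (i : Fin 3) (hi : i ≠ 2)
    (h0 : ∀ p : E3, p 2 = q 2 → fc C.Φ w i p = 0) (c : ℝ)
    (hc : w (C.Φ q) = c • pdv 2 C.Φ q) :
    ⟪pdv i C.Φ q, fderiv ℝ w (C.Φ q) (pdv i C.Φ q)⟫ =
      c * (lame C.Φ i q * pds 2 (lame C.Φ i) q) := by
  have hX := pdv_differentiable C.smooth i q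
  have hX2 := pdv_differentiable C.smooth 2 q
  have hΦ : DifferentiableAt ℝ C.Φ q := C.smooth.differentiable (by simp) q
  have hwd : DifferentiableAt ℝ w (C.Φ q) := hw.differentiable one_ne_zero _
  have hW : DifferentiableAt ℝ (fun p => w (C.Φ p)) q := hwd.comp q hΦ
  have hWd : fderiv ℝ (fun p => w (C.Φ p)) q (EuclideanSpace.single i 1)
      = fderiv ℝ w (C.Φ q) (pdv i C.Φ q) := by
    have := fderiv_comp q hwd hΦ
    simp only [Function.comp_def] at this
    rw [this]; rfl
  -- differentiate `W · X_i = 0` along the surface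
  have hg : DifferentiableAt ℝ (fun p => ⟪w (C.Φ p), pdv i C.Φ p⟫) q := hW.inner ℝ hX
  have hz : fderiv ℝ (fun p => ⟪w (C.Φ p), pdv i C.Φ p⟫) q (EuclideanSpace.single i 1) = 0 := by
    rw [← hg.lineDeriv_eq_fderiv]
    have : (fun t : ℝ => (⟪w (C.Φ (q + t • EuclideanSpace.single i (1 : ℝ))),
        pdv i C.Φ (q + t • EuclideanSpace.single i (1 : ℝ))⟫ : ℝ)) = fun _ => 0 := by
      funext t
      have h := h0 (q + t • EuclideanSpace.single i (1 : ℝ)) (by simp [hi.symm])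
      simp only [fc, uvec, inner_smul_right] at h
      rcases mul_eq_zero.mp h with h | h
      · exact absurd h (inv_ne_zero (lame_pos C i _).ne')
      · exact h
    simp only [lineDeriv, this]
    simp
  rw [fderiv_inner_apply ℝ hW hX, hWd] at hz
  have ho : (fun p => (⟪pdv 2 C.Φ p, pdv i C.Φ p⟫ : ℝ)) = fun _ => 0 := by
    funext p; exact C.orth p 2 i hi.symm
  have ho2 := congrArg (fun f => fderiv ℝ f q (EuclideanSpace.single i (1 : ℝ))) ho
  rw [fderiv_inner_apply ℝ hX2 hX] at ho2
  simp only [fderiv_fun_const, Pi.zero_apply, _root_.zero_apply] at ho2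
  rw [hc, inner_smul_left] at hz
  simp only [conj_trivial] at hz
  rw [pds_lame, pdv_comm C.smooth i 2 q, real_inner_comm, real_inner_comm (pdv i (pdv 2 C.Φ) q)]
  simp only [pdv] at *
  linear_combination hz - c * ho2

lemma ptw {Ω : Set E3} {ρ₀ ρ₁ : ℝ} (C : CurvCoord Ω ρ₀ ρ₁)
    (w : E3 → E3) (hw : ContDiff ℝ 1 w)
    (hdiv : ∀ x ∈ closure Ω, div3 w x = 0)
    (hbc : ∀ q : E3, (q 2 = ρ₀ ∨ q 2 = ρ₁) → fc C.Φ w 0 q = 0 ∧ fc C.Φ w 1 q = 0)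
    (q : E3) (hq : q 2 = ρ₀ ∨ q 2 = ρ₁) :
    (lame C.Φ 2 q)⁻¹ * pds 2 (fun q => (∑ i : Fin 3, fc C.Φ w i q ^ 2) / 2) q
      * (lame C.Φ 0 q * lame C.Φ 1 q) =
    - (pds 2 (fun q => lame C.Φ 0 q * lame C.Φ 1 q) q * (lame C.Φ 2 q)⁻¹ * fc C.Φ w 2 q ^ 2) := by
  have hΦ : DifferentiableAt ℝ C.Φ q := C.smooth.differentiable (by simp) q
  have hwd : DifferentiableAt ℝ w (C.Φ q) := hw.differentiable one_ne_zero _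
  have hW : DifferentiableAt ℝ (fun p => w (C.Φ p)) q := hwd.comp q hΦ
  have hWd : fderiv ℝ (fun p => w (C.Φ p)) q (EuclideanSpace.single 2 1)
      = fderiv ℝ w (C.Φ q) (pdv 2 C.Φ q) := by
    have := fderiv_comp q hwd hΦ
    simp only [Function.comp_def] at this
    rw [this]; rfl
  have hP0 := lame_pos C 0 q
  have hP1 := lame_pos C 1 q
  have hP2 := lame_pos C 2 q
  obtain ⟨c, hcdef⟩ : ∃ c, c = fc C.Φ w 2 q * (lame C.Φ 2 q)⁻¹ := ⟨_, rfl⟩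
  have hc : w (C.Φ q) = c • pdv 2 C.Φ q := by
    obtain ⟨b, hb⟩ := frameB C q
    have h := b.sum_repr' (w (C.Φ q))
    simp only [Fin.sum_univ_three, hb] at h
    have e0 : ⟪uvec C.Φ 0 q, w (C.Φ q)⟫ = (0 : ℝ) := by
      rw [real_inner_comm]; exact (hbc q hq).1
    have e1 : ⟪uvec C.Φ 1 q, w (C.Φ q)⟫ = (0 : ℝ) := by
      rw [real_inner_comm]; exact (hbc q hq).2
    rw [e0, e1, real_inner_comm] at h
    rw [← h, hcdef, ← smul_smul]
    simp [fc, uvec, lame]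
  have t0 := tangential C w hw q 0 (by decide) (fun p hp => (hbc p (by rw [hp]; exact hq)).1) c hc
  have t1 := tangential C w hw q 1 (by decide) (fun p hp => (hbc p (by rw [hp]; exact hq)).2) c hc
  have hd := hdiv _ (Phi_mem C q hq)
  rw [div3_frame C q] at hd
  simp only [Fin.sum_univ_three, uvec, map_smul, inner_smul_left, inner_smul_right,
    conj_trivial] at hd
  rw [t0, t1] at hd
  have hn : pds 2 (fun q => (∑ i : Fin 3, fc C.Φ w i q ^ 2) / 2) q
      = c * ⟪pdv 2 C.Φ q, fderiv ℝ w (C.Φ q) (pdv 2 C.Φ q)⟫ := by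
    simp only [sum_fc_sq, pds, div_eq_mul_inv]
    rw [fderiv_mul_const (hW.inner ℝ hW), _root_.smul_apply, fderiv_inner_apply ℝ hW hW, hWd, hc,
      real_inner_comm, inner_smul_right, real_inner_comm]
    simp only [smul_eq_mul, conj_trivial]
    ring
  have hm : pds 2 (fun q => lame C.Φ 0 q * lame C.Φ 1 q) q
      = lame C.Φ 0 q * pds 2 (lame C.Φ 1) q + lame C.Φ 1 q * pds 2 (lame C.Φ 0) q := by
    simp only [pds]
    rw [fderiv_fun_mul (lame_differentiable C 0 q) (lame_differentiable C 1 q)]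
    rfl
  have hf : fc C.Φ w 2 q = c * lame C.Φ 2 q := by
    rw [hcdef]; field_simp
  rw [hn, hm, hf]
  generalize (⟪pdv 2 C.Φ q, fderiv ℝ w (C.Φ q) (pdv 2 C.Φ q)⟫ : ℝ) = T at *
  field_simp at hd ⊢
  linear_combination c * hd

-- CURV
/-- For a `C¹` divergence-free field `ω` on `Ω̄` whose tangential
frame components vanish on the boundary surfaces `q₃ = ρ₀, ρ₁`, one has
`(2l−1) ∫_{∂Ω^l} (n·∇)ω · ω dS = −∫₀¹∫₀¹ ∂_{q₃}(H₁H₂) H₃⁻¹ ω̂₃² |_{q₃=ρ_l} dq₁ dq₂`,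
where on `∂Ω^l` the surface element is `dS = H₁H₂ dq₁dq₂` and
`n·∇ = (2l−1) H₃⁻¹ ∂_{q₃}`, so that `(n·∇)ω · ω = (2l−1) H₃⁻¹ ∂_{q₃}(|ω̂|²/2)`. -/
theorem boundary_normal_derivative_vorticity_integral
    (Ω : Set E3) (ρ₀ ρ₁ : ℝ) (𝒞 : CurvCoord Ω ρ₀ ρ₁)
    (ω : E3 → E3) (hω : ContDiff ℝ 1 ω)
    (hdiv : ∀ x ∈ closure Ω, div3 ω x = 0)
    (hbc : ∀ q : E3, (q 2 = ρ₀ ∨ q 2 = ρ₁) → fc 𝒞.Φ ω 0 q = 0 ∧ fc 𝒞.Φ ω 1 q = 0)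
    (l : Fin 2) :
    (2 * (l : ℕ) - 1 : ℝ) *
      (∫ a in Icc (0 : ℝ) 1, ∫ b in Icc (0 : ℝ) 1,
        ((2 * (l : ℕ) - 1 : ℝ) * (lame 𝒞.Φ 2 (v3 a b (bval ρ₀ ρ₁ l)))⁻¹
            * pds 2 (fun q => (∑ i : Fin 3, fc 𝒞.Φ ω i q ^ 2) / 2) (v3 a b (bval ρ₀ ρ₁ l)))
          * (lame 𝒞.Φ 0 (v3 a b (bval ρ₀ ρ₁ l)) * lame 𝒞.Φ 1 (v3 a b (bval ρ₀ ρ₁ l)))) =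
    - ∫ a in Icc (0 : ℝ) 1, ∫ b in Icc (0 : ℝ) 1,
        pds 2 (fun q => lame 𝒞.Φ 0 q * lame 𝒞.Φ 1 q) (v3 a b (bval ρ₀ ρ₁ l))
          * (lame 𝒞.Φ 2 (v3 a b (bval ρ₀ ρ₁ l)))⁻¹
          * fc 𝒞.Φ ω 2 (v3 a b (bval ρ₀ ρ₁ l)) ^ 2 := by
  have hs : (2 * ((l : ℕ) : ℝ) - 1) * (2 * ((l : ℕ) : ℝ) - 1) = 1 := by
    fin_cases l <;> norm_num
  rw [← integral_const_mul, ← integral_neg]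
  refine congrArg _ (funext fun a => ?_)
  rw [← integral_const_mul, ← integral_neg]
  refine congrArg _ (funext fun b => ?_)
  have h := ptw 𝒞 ω hω hdiv hbc (v3 a b (bval ρ₀ ρ₁ l)) (by
    fin_cases l
    · left; simp [v3, bval]
    · right; simp [v3, bval])
  rw [← h]
  linear_combination ((lame 𝒞.Φ 2 (v3 a b (bval ρ₀ ρ₁ l)))⁻¹
    * pds 2 (fun q => (∑ i : Fin 3, fc 𝒞.Φ ω i q ^ 2) / 2) (v3 a b (bval ρ₀ ρ₁ l))
    * (lame 𝒞.Φ 0 (v3 a b (bval ρ₀ ρ₁ l)) * lame 𝒞.Φ 1 (v3 a b (bval ρ₀ ρ₁ l)))) * hs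

end
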